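/- Let F be a number field and write k = 2^s·k₁ with k₁ odd. If a primitive 2^{s+1}-th root of unity lies in F_𝔭 for every finite place 𝔭 of F, then a primitive 2^{s+1}-th root of unity lies in F, and consequently −1 ∈ (F^×)^k. -/

import Mathlib

open IsDedekindDomain NumberField

/-!
Let `L = F(ζ)`, where `ζ` is a primitive `2^(s+1)`-th root of unity. At a prime whose completion
contains such a root of unity, `L` embeds into that completion and so has a prime of residue
degree one above it. If this happens at almost every prime of `F` and `σ` is a nontrivial
automorphism of `L` over `F`, then above almost every prime `v` there are two such primes `w` and
`σ⁻¹ w`: were they equal, `w` would contain `σ x - x` for all `x`, which excludes all but finitely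
many `w`.

Instead of Chebotarev's theorem, counting ideals rules this out. Sending a pair `(I, J)` of ideals
of `F` prime to a finite set to the product of the lifts of `I` along the `w` and of `J` along the
`σ⁻¹ w` is injective and multiplies norms. As the ideals of norm at most `x` number `c x + o(x)` for
`L`, and likewise for `F` with finitely many Euler factors removed, such an injection forces
`∑ 1 / N(J)` to converge; linear growth makes it diverge. Hence `L = F`.
-/

open Filter Function Set Topology UniqueFactorizationMonoid nonZeroDivisors

/-- `N` is a size function on `ι`, with positive values and finitely many objects below each bound,
for which `c * x + o(x)` objects have size at most `x`; the model is the norm on the nonzero ideals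
of a number field. -/
structure HasLinearGrowth {ι : Type*} (N : ι → ℝ) (c : ℝ) : Prop where
  pos : ∀ i, 0 < N i
  finite_le : ∀ x, {i | N i ≤ x}.Finite
  tendsto_ncard_div : Tendsto (fun x ↦ ({i | N i ≤ x}.ncard : ℝ) / x) atTop (𝓝 c)

namespace HasLinearGrowth

variable {ι κ J : Type*} {N : ι → ℝ} {M : κ → ℝ} {a b : ℝ}

theorem comp_bijective (hN : HasLinearGrowth N a) {f : κ → ι} (hf : Bijective f) :
    HasLinearGrowth (N ∘ f) a where
  pos k := hN.pos (f k)
  finite_le x := (hN.finite_le x).preimage hf.injective.injOn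
  tendsto_ncard_div := hN.tendsto_ncard_div.congr fun x ↦ by
    rw [← ncard_preimage_of_injective_subset_range hf.injective (by simp [hf.surjective.range_eq])]
    rfl

theorem tendsto_ncard_le_div_const (hN : HasLinearGrowth N a) {q : ℝ} (hq : 0 < q) :
    Tendsto (fun x ↦ ({i | N i ≤ x / q}.ncard : ℝ) / x) atTop (𝓝 (q⁻¹ * a)) := by
  have hlim := hN.tendsto_ncard_div.comp (tendsto_id.atTop_div_const hq)
  refine (hlim.const_mul q⁻¹).congr fun x ↦ ?_
  simp only [comp_apply, id]
  field_simp

/-- The image of `m` has density `q⁻¹` in `ι`. -/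
theorem comp_of_isCompl_range (hN : HasLinearGrowth N a) {m : ι → ι} (hm : Injective m) {q : ℝ}
    (hq : 0 < q) (hNm : ∀ i, N (m i) = q * N i) {f : κ → ι} (hf : Injective f)
    (hfm : IsCompl (range f) (range m)) : HasLinearGrowth (N ∘ f) (a - q⁻¹ * a) where
  pos k := hN.pos (f k)
  finite_le x := (hN.finite_le x).preimage hf.injOn
  tendsto_ncard_div := by
    refine (hN.tendsto_ncard_div.sub (hN.tendsto_ncard_le_div_const hq)).congr fun x ↦ ?_
    have hfin : {k | N (f k) ≤ x}.Finite := (hN.finite_le x).preimage hf.injOn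
    have hrange : range f ∪ range m = univ := hfm.sup_eq_top
    have hsplit : {i | N i ≤ x} = f '' {k | N (f k) ≤ x} ∪ m '' {i | N i ≤ x / q} := by
      have hm_preimage : {i | N i ≤ x / q} = m ⁻¹' {i | N i ≤ x} := by
        ext i
        simp only [mem_ofPred_eq, mem_preimage, hNm, le_div_iff₀' hq]
      rw [hm_preimage]
      change {i | N i ≤ x} = f '' (f ⁻¹' {i | N i ≤ x}) ∪ _
      rw [image_preimage_eq_inter_range, image_preimage_eq_inter_range, ← inter_union_distrib_left,
        hrange, inter_univ]
    have hdisj : Disjoint (f '' {k | N (f k) ≤ x}) (m '' {i | N i ≤ x / q}) :=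
      hfm.disjoint.mono (image_subset_range _ _) (image_subset_range _ _)
    rw [← sub_div, hsplit, ncard_union_eq hdisj (hfin.image f) ((hN.finite_le _).image m),
      ncard_image_of_injective _ hf, ncard_image_of_injective _ hm, Nat.cast_add,
      add_sub_cancel_right]
    rfl

theorem not_summable_inv (hN : HasLinearGrowth N a) (ha : 0 < a) :
    ¬ Summable fun i ↦ (N i)⁻¹ := by
  classical
  intro hsum
  obtain ⟨T, hT⟩ := summable_iff_vanishing_norm.mp hsum (a / 2) (half_pos ha)
  have hlim : Tendsto (fun x ↦ ({i | N i ≤ x}.ncard - T.card : ℝ) / x) atTop (𝓝 a) := by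
    simpa only [sub_div, sub_zero, id] using
      hN.tendsto_ncard_div.sub (tendsto_const_nhds (x := (T.card : ℝ)).div_atTop tendsto_id)
  obtain ⟨x, hx, hx0⟩ :=
    ((hlim.eventually_const_lt (half_lt_self ha)).and (eventually_gt_atTop 0)).exists
  set B := (hN.finite_le x).toFinset
  have hbound : ({i | N i ≤ x}.ncard - T.card : ℝ) / x ≤ ∑ i ∈ B \ T, (N i)⁻¹ :=
    calc ({i | N i ≤ x}.ncard - T.card : ℝ) / x ≤ ((B \ T).card : ℝ) / x := by
          rw [ncard_eq_toFinset_card _ (hN.finite_le x)]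
          gcongr
          rw [sub_le_iff_le_add]
          exact_mod_cast Nat.sub_le_iff_le_add.mp (Finset.le_card_sdiff T B)
      _ = ∑ _i ∈ B \ T, x⁻¹ := by rw [Finset.sum_const, nsmul_eq_mul, div_eq_mul_inv]
      _ ≤ ∑ i ∈ B \ T, (N i)⁻¹ := by
          refine Finset.sum_le_sum fun i hi ↦ inv_anti₀ (hN.pos i) ?_
          exact (hN.finite_le x).mem_toFinset.mp (Finset.mem_sdiff.mp hi).1
  exact ((hx.trans_le hbound).trans_le (le_abs_self _)).not_gt (hT _ Finset.sdiff_disjoint)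

/-- For each `j` the pairs `(i, j)` alone have growth `a / R j`; together they embed into `κ`. -/
theorem summable_inv_of_injective_prod (hN : HasLinearGrowth N a) (ha : 0 < a)
    (hM : HasLinearGrowth M b) {R : J → ℝ} (hR : ∀ j, 0 < R j) {Φ : ι × J → κ} (hΦ : Injective Φ)
    (hMΦ : ∀ p, M (Φ p) = N p.1 * R p.2) : Summable fun j ↦ (R j)⁻¹ := by
  refine summable_of_sum_le (c := b / a) (fun j ↦ (inv_pos.mpr (hR j)).le) fun U ↦ ?_
  rw [le_div_iff₀ ha, Finset.sum_mul]
  refine le_of_tendsto_of_tendsto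
    (tendsto_finsetSum U fun j _ ↦ hN.tendsto_ncard_le_div_const (hR j)) hM.tendsto_ncard_div ?_
  filter_upwards [eventually_ge_atTop 0] with x hx
  have hcount : ∑ j ∈ U, {i | N i ≤ x / R j}.ncard ≤ {k | M k ≤ x}.ncard := by
    simp only [ncard_eq_toFinset_card _ (hN.finite_le _), ncard_eq_toFinset_card _ (hM.finite_le _),
      ← Finset.card_sigma]
    refine Finset.card_le_card_of_injOn (fun p ↦ Φ (p.2, p.1)) ?_ ?_
    · rintro ⟨j, i⟩ hij
      simpa [hMΦ, le_div_iff₀ (hR j)] using (Finset.mem_sigma.mp hij).2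
    · rintro ⟨j, i⟩ - ⟨j', i'⟩ - h
      obtain ⟨rfl, rfl⟩ := Prod.mk.inj (hΦ h)
      rfl
  rw [← Finset.sum_div, ← Nat.cast_sum]
  gcongr

theorem not_injective_prod (hN : HasLinearGrowth N a) (ha : 0 < a) (hM : HasLinearGrowth M b)
    {Φ : ι × ι → κ} (hMΦ : ∀ p, M (Φ p) = N p.1 * N p.2) : ¬ Injective Φ := fun hΦ ↦
  hN.not_summable_inv ha (hN.summable_inv_of_injective_prod ha hM hN.pos hΦ hMΦ)

end HasLinearGrowth

section Multiset

variable {U V W : Type*} {N : V → ℝ} {M : W → ℝ} {a b : ℝ}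

theorem isCompl_range_multiset_map_cons {f : U → V} {p : V} (hf : range f = {p}ᶜ) :
    IsCompl (range (Multiset.map f)) (range (p ::ₘ ·)) := by
  constructor
  · rw [Set.disjoint_left]
    rintro _ ⟨t, rfl⟩ ⟨s, hs : p ::ₘ s = t.map f⟩
    obtain ⟨u, -, hu⟩ := Multiset.mem_map.mp (hs ▸ Multiset.mem_cons_self p s)
    exact (hf ▸ mem_range_self u : f u ∈ ({p}ᶜ : Set V)) hu
  · rw [codisjoint_iff_le_sup]
    rintro s -
    by_cases hp : p ∈ s
    · exact .inr ((Multiset.exists_cons_of_mem hp).imp fun _ ↦ Eq.symm)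
    · have : CanLift V U f (· ∈ range f) := ⟨fun _ ↦ id⟩
      lift s to Multiset U using fun x hx ↦ hf ▸ ne_of_mem_of_not_mem hx hp
      exact .inl (mem_range_self s)

/-- Removing `p` multiplies the density by the Euler factor `1 - (N p)⁻¹`. -/
theorem HasLinearGrowth.multiset_of_range_eq_compl_singleton
    (hN : HasLinearGrowth (fun s : Multiset V ↦ (s.map N).prod) a) {f : U → V} (hf : Injective f)
    {p : V} (hp : range f = {p}ᶜ) :
    HasLinearGrowth (fun s : Multiset U ↦ (s.map (N ∘ f)).prod) (a - (N p)⁻¹ * a) := by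
  have hNp : 0 < N p := by simpa using hN.pos {p}
  have := hN.comp_of_isCompl_range (fun _ _ ↦ (Multiset.cons_inj_right p).mp) hNp
    (fun s ↦ by rw [Multiset.map_cons, Multiset.prod_cons]) (Multiset.map_injective hf)
    (isCompl_range_multiset_map_cons hp)
  simpa only [comp_def, Multiset.map_map] using this

theorem exists_hasLinearGrowth_multiset_compl (hN1 : ∀ v, 1 < N v) (ha : 0 < a)
    (hN : HasLinearGrowth (fun s : Multiset V ↦ (s.map N).prod) a) {S : Set V} (hS : S.Finite) :
    ∃ a' > 0, HasLinearGrowth (fun s : Multiset ↥Sᶜ ↦ (s.map (N ∘ (↑))).prod) a' := by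
  induction S, hS using Set.Finite.induction_on with
  | empty =>
    refine ⟨a, ha, ?_⟩
    have hval : Bijective ((↑) : ↥(∅ : Set V)ᶜ → V) :=
      ⟨Subtype.val_injective, fun v ↦ ⟨⟨v, notMem_empty v⟩, rfl⟩⟩
    have := hN.comp_bijective (f := Multiset.map ((↑) : ↥(∅ : Set V)ᶜ → V))
      ⟨Multiset.map_injective hval.injective, Multiset.map_surjective_of_surjective hval.surjective⟩
    simpa only [comp_def, Multiset.map_map] using this
  | @insert p S hp _ ih =>
    obtain ⟨a', ha', hS'⟩ := ih
    have hsub : (insert p S)ᶜ ⊆ Sᶜ := compl_subset_compl.mpr (subset_insert p S)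
    have hrange : range (inclusion hsub) = {(⟨p, hp⟩ : ↥Sᶜ)}ᶜ := by
      ext ⟨v, hv⟩
      rw [mem_compl_iff] at hv
      simp [hv]
    refine ⟨a' - (N p)⁻¹ * a', ?_, hS'.multiset_of_range_eq_compl_singleton
      (inclusion_injective hsub) hrange⟩
    exact sub_pos.mpr (mul_lt_of_lt_one_left ha' (inv_lt_one_of_one_lt₀ (hN1 p)))

theorem injective_multiset_map_add_map {P P' : V → W} (h : Injective (Sum.elim P P')) :
    Injective fun p : Multiset V × Multiset V ↦ p.1.map P + p.2.map P' := by
  let tag (p : Multiset V × Multiset V) : Multiset (V ⊕ V) := p.1.map .inl + p.2.map .inr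
  have htag : LeftInverse
      (fun s : Multiset (V ⊕ V) ↦ (s.filterMap Sum.getLeft?, s.filterMap Sum.getRight?)) tag := by
    have hnone (s : Multiset V) : s.filterMap (fun _ ↦ (none : Option V)) = 0 :=
      Multiset.eq_zero_of_forall_notMem (by simp)
    rintro ⟨s, t⟩
    simp [tag, Multiset.filterMap_map, comp_def, hnone]
  convert (Multiset.map_injective h).comp htag.injective using 2 with p
  simp [tag]

theorem not_injective_sumElim_of_norm_eq (ha : 0 < a)
    (hN : HasLinearGrowth (fun s : Multiset V ↦ (s.map N).prod) a)
    (hM : HasLinearGrowth (fun s : Multiset W ↦ (s.map M).prod) b) {P P' : V → W}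
    (hP : ∀ v, M (P v) = N v) (hP' : ∀ v, M (P' v) = N v) : ¬ Injective (Sum.elim P P') := by
  refine fun h ↦ hN.not_injective_prod ha hM (fun p ↦ ?_) (injective_multiset_map_add_map h)
  simp only [Multiset.map_add, Multiset.map_map, comp_def, hP, hP', Multiset.prod_add]

end Multiset

section Ideals

theorem exists_bijective_multiset_prod_asIdeal (R : Type*) [CommRing R] [IsDedekindDomain R] :
    ∃ f : Multiset (HeightOneSpectrum R) → (Ideal R)⁰, Bijective f ∧
      ∀ s, (f s : Ideal R) = (s.map HeightOneSpectrum.asIdeal).prod := by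
  have hprime (s : Multiset (HeightOneSpectrum R)) :
      ∀ p ∈ s.map HeightOneSpectrum.asIdeal, Prime p := by
    simpa using fun v _ ↦ v.prime
  refine ⟨fun s ↦ ⟨(s.map HeightOneSpectrum.asIdeal).prod,
    mem_nonZeroDivisors_of_ne_zero (Multiset.prod_ne_zero_of_prime _ (hprime s))⟩,
    ⟨fun s t hst ↦ ?_, fun I ↦ ?_⟩, fun _ ↦ rfl⟩
  · have := congrArg normalizedFactors (congrArg Subtype.val hst)
    simp only [normalizedFactors_prod_of_prime (hprime _)] at this
    exact Multiset.map_injective HeightOneSpectrum.asIdeal_injective this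
  · have : CanLift (Ideal R) (HeightOneSpectrum R) HeightOneSpectrum.asIdeal Prime :=
      ⟨fun _ hp ↦ ⟨.ofPrime hp, rfl⟩⟩
    have hfactors := Ideal.prod_normalizedFactors_eq_self (nonZeroDivisors.coe_ne_zero I)
    lift normalizedFactors (I : Ideal R) to Multiset (HeightOneSpectrum R)
      using fun _ ↦ prime_of_normalized_factor _ with s
    exact ⟨s, Subtype.ext hfactors⟩

variable (K : Type*) [Field K] [NumberField K]

theorem hasLinearGrowth_absNorm :
    HasLinearGrowth (fun I : (Ideal (𝓞 K))⁰ ↦ (Ideal.absNorm (I : Ideal (𝓞 K)) : ℝ))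
      (dedekindZeta_residue K) where
  pos I := mod_cast Ideal.absNorm_pos_of_nonZeroDivisors I
  finite_le x := (Ideal.finite_setOfPred_absNorm_le₀ ⌊x⌋₊).subset fun _ hI ↦ Nat.le_floor hI
  tendsto_ncard_div := Ideal.tendsto_norm_le_div_atTop₀ K

theorem hasLinearGrowth_multiset_absNorm :
    HasLinearGrowth (fun s : Multiset (HeightOneSpectrum (𝓞 K)) ↦
      (s.map fun v ↦ (Ideal.absNorm v.asIdeal : ℝ)).prod) (dedekindZeta_residue K) := by
  obtain ⟨f, hf, hfs⟩ := exists_bijective_multiset_prod_asIdeal (𝓞 K)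
  convert (hasLinearGrowth_absNorm K).comp_bijective hf with s
  simp [hfs, map_multiset_prod]

end Ideals

section DegreeOnePrimes

variable {A B C : Type*} [CommRing A] [CommRing B] [CommRing C] [Algebra A B] [Algebra A C]

theorem surjective_algebraMap_quotient_iff {I : Ideal B} :
    Surjective (algebraMap A (B ⧸ I)) ↔ ∀ x : B, ∃ a : A, algebraMap A B a - x ∈ I := by
  simp only [Surjective, (Ideal.Quotient.mk_surjective (I := I)).forall, ← Ideal.Quotient.eq]
  rfl

theorem surjective_algebraMap_quotient_comap (f : B →ₐ[A] C) {I : Ideal C}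
    (hI : Surjective (algebraMap A (C ⧸ I))) : Surjective (algebraMap A (B ⧸ I.comap f)) := by
  rw [surjective_algebraMap_quotient_iff] at hI ⊢
  intro x
  simpa using hI (f x)

theorem apply_sub_mem_of_comap_eq {σ : B ≃ₐ[A] B} {I : Ideal B}
    (hI : Surjective (algebraMap A (B ⧸ I))) (hσ : I.comap σ = I) (x : B) : σ x - x ∈ I := by
  obtain ⟨a, ha⟩ := surjective_algebraMap_quotient_iff.mp hI x
  have hσa : algebraMap A B a - σ x ∈ I := by
    rw [← hσ, Ideal.mem_comap] at ha
    simpa using ha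
  simpa using I.sub_mem ha hσa

variable (B) in
/-- The primes `w` of `B` above the prime `v` of `A` with residue degree one, expressed as
surjectivity of `A → B ⧸ w`; in rings of integers, the primes above `v` with the norm of `v`. -/
def degreeOnePrimesOver (v : HeightOneSpectrum A) : Set (HeightOneSpectrum B) :=
  {w | w.asIdeal.LiesOver v.asIdeal ∧ Surjective (algebraMap A (B ⧸ w.asIdeal))}

variable {v v' : HeightOneSpectrum A} {w : HeightOneSpectrum B}

theorem card_quotient_eq_of_mem_degreeOnePrimesOver (hw : w ∈ degreeOnePrimesOver B v) :
    Nat.card (B ⧸ w.asIdeal) = Nat.card (A ⧸ v.asIdeal) := by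
  have hker : v.asIdeal = RingHom.ker (algebraMap A (B ⧸ w.asIdeal)) := by
    rw [hw.1.over]
    ext a
    exact (Ideal.Quotient.eq_zero_iff_mem (I := w.asIdeal)).symm
  rw [hker]
  exact (Nat.card_congr (RingHom.quotientKerEquivOfSurjective hw.2).toEquiv).symm

theorem eq_of_mem_degreeOnePrimesOver (hv : w ∈ degreeOnePrimesOver B v)
    (hv' : w ∈ degreeOnePrimesOver B v') : v = v' :=
  HeightOneSpectrum.ext (hv.1.over.trans hv'.1.over.symm)

theorem comap_mem_degreeOnePrimesOver (hw : w ∈ degreeOnePrimesOver B v) (σ : B ≃ₐ[A] B) :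
    w.comap (σ : B →+* B) σ.surjective ∈ degreeOnePrimesOver B v :=
  have := hw.1
  ⟨inferInstanceAs ((w.asIdeal.comap σ).LiesOver v.asIdeal),
    surjective_algebraMap_quotient_comap (σ : B →ₐ[A] B) hw.2⟩

theorem eventually_notMem_of_liesOver [IsDedekindDomain A] [IsDomain B] [Algebra.IsIntegral A B]
    {b : B} (hb : b ≠ 0) :
    ∀ᶠ v : HeightOneSpectrum A in cofinite,
      ∀ I : Ideal B, I.LiesOver v.asIdeal → b ∉ I := by
  have hne : (Ideal.span {b}).under A ≠ ⊥ :=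
    Ideal.under_ne_bot _ (by simpa using hb)
  filter_upwards [(Ideal.finite_factors hne).compl_mem_cofinite] with v hv I hI hbI
  refine hv (Ideal.dvd_iff_le.mpr ?_)
  rw [hI.over]
  exact Ideal.comap_mono ((Ideal.span_singleton_le_iff_mem I).mpr hbI)

end DegreeOnePrimes

section NumberField

variable (F L : Type*) [Field F] [NumberField F] [Field L] [NumberField L] [Algebra F L]

theorem frequently_subsingleton_degreeOnePrimesOver :
    ∃ᶠ v : HeightOneSpectrum (𝓞 F) in cofinite, (degreeOnePrimesOver (𝓞 L) v).Subsingleton := by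
  set S := {v : HeightOneSpectrum (𝓞 F) | (degreeOnePrimesOver (𝓞 L) v).Subsingleton}
  rw [frequently_cofinite_iff_infinite]
  intro hS
  have htwo (v : ↥Sᶜ) : (degreeOnePrimesOver (𝓞 L) (v : HeightOneSpectrum (𝓞 F))).Nontrivial :=
    not_subsingleton_iff.mp v.2
  choose P hP P' hP' hne using htwo
  obtain ⟨a, ha, hgrowth⟩ := exists_hasLinearGrowth_multiset_compl
    (fun v ↦ mod_cast HeightOneSpectrum.one_lt_absNorm v) (dedekindZeta_residue_pos F)
    (hasLinearGrowth_multiset_absNorm F) hS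
  have hnorm {Q : ↥Sᶜ → HeightOneSpectrum (𝓞 L)} (hQ : ∀ v, Q v ∈ degreeOnePrimesOver (𝓞 L) v.1)
      (v : ↥Sᶜ) : (Ideal.absNorm (Q v).asIdeal : ℝ) = Ideal.absNorm v.1.asIdeal :=
    congrArg Nat.cast (card_quotient_eq_of_mem_degreeOnePrimesOver (hQ v))
  refine not_injective_sumElim_of_norm_eq ha hgrowth (hasLinearGrowth_multiset_absNorm L)
    (hnorm hP) (hnorm hP') (Injective.sumElim ?_ ?_ ?_)
  · exact fun v v' h ↦ Subtype.ext (eq_of_mem_degreeOnePrimesOver (hP v) (h ▸ hP v'))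
  · exact fun v v' h ↦ Subtype.ext (eq_of_mem_degreeOnePrimesOver (hP' v) (h ▸ hP' v'))
  · intro v v' h
    obtain rfl : v = v' := Subtype.ext (eq_of_mem_degreeOnePrimesOver (hP v) (h ▸ hP' v'))
    exact hne v h

variable {F L}

theorem subsingleton_algEquiv_of_eventually_nonempty_degreeOnePrimesOver
    (h : ∀ᶠ v : HeightOneSpectrum (𝓞 F) in cofinite, (degreeOnePrimesOver (𝓞 L) v).Nonempty) :
    Subsingleton (𝓞 L ≃ₐ[𝓞 F] 𝓞 L) := by
  refine subsingleton_of_forall_eq 1 fun σ ↦ AlgEquiv.ext fun x ↦ ?_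
  by_contra hx
  obtain ⟨v, hsub, ⟨w, hw⟩, hmem⟩ :=
    ((frequently_subsingleton_degreeOnePrimesOver F L).and_eventually
      (h.and (eventually_notMem_of_liesOver (sub_ne_zero.mpr hx)))).exists
  have hσw : w.comap (σ : 𝓞 L →+* 𝓞 L) σ.surjective = w :=
    hsub (comap_mem_degreeOnePrimesOver hw σ) hw
  exact hmem _ hw.1 (apply_sub_mem_of_comap_eq hw.2 (congrArg HeightOneSpectrum.asIdeal hσw) x)

theorem surjective_algebraMap_of_eventually_nonempty_degreeOnePrimesOver [IsGalois F L]
    (h : ∀ᶠ v : HeightOneSpectrum (𝓞 F) in cofinite, (degreeOnePrimesOver (𝓞 L) v).Nonempty) :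
    Surjective (algebraMap F L) := by
  have := subsingleton_algEquiv_of_eventually_nonempty_degreeOnePrimesOver h
  have := (galRestrict (𝓞 F) F L (𝓞 L)).toEquiv.subsingleton
  intro x
  exact IntermediateField.mem_bot.mp
    ((IsGalois.mem_bot_iff_fixed x).mpr fun σ ↦ by rw [Subsingleton.elim σ 1, AlgEquiv.one_apply])

end NumberField

section Completions

variable {R K : Type*} [CommRing R] [IsDedekindDomain R] [Field K] [Algebra R K]
  [IsFractionRing R K] (v : HeightOneSpectrum R)

theorem exists_valued_algebraMap_sub_lt_one (x : v.adicCompletion K) :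
    ∃ k : K, Valued.v (algebraMap K (v.adicCompletion K) k - x) < 1 := by
  have hopen : IsOpen {y : v.adicCompletion K | Valued.v (y - x) < 1} := by
    simpa [preimage, Valuation.restrict_lt_one_iff] using
      (Valued.isOpen_ball (v.adicCompletion K) 1).preimage (continuous_sub_right x)
  exact (HeightOneSpectrum.denseRange_algebraMap K v).exists_mem_open hopen ⟨x, by simp⟩

theorem surjective_algebraMap_quotient_maximalIdeal_adicCompletionIntegers :
    Surjective (algebraMap R (v.adicCompletionIntegers K ⧸
      IsLocalRing.maximalIdeal (v.adicCompletionIntegers K))) := by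
  rw [surjective_algebraMap_quotient_iff]
  intro x
  obtain ⟨k, hk⟩ := exists_valued_algebraMap_sub_lt_one v (x : v.adicCompletion K)
  have hk1 : v.valuation K k ≤ 1 := by
    rw [← v.valuedAdicCompletion_eq_valuation']
    have := Valued.v.map_add_le hk.le x.2
    rwa [sub_add_cancel] at this
  obtain ⟨r, hr⟩ := v.exists_valuation_sub_lt_of_integer hk1 1
  rw [← v.valuedAdicCompletion_eq_valuation'] at hr
  change Valued.v (algebraMap K (v.adicCompletion K) (algebraMap R K r - k)) < 1 at hr
  refine ⟨r, (Valuation.mem_maximalIdeal_iff _ _).mpr ?_⟩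
  have hrx := Valued.v.map_add_lt hr hk
  rwa [map_sub, sub_add_sub_cancel] at hrx

theorem under_maximalIdeal_adicCompletionIntegers :
    (IsLocalRing.maximalIdeal (v.adicCompletionIntegers K)).under R = v.asIdeal := by
  ext a
  rw [← v.valuation_lt_one_iff_mem (K := K), ← v.valuedAdicCompletion_eq_valuation']
  exact Valuation.mem_maximalIdeal_iff _ _

theorem degreeOnePrimesOver_nonempty_of_algHom_adicCompletion {B : Type*} [CommRing B]
    [Algebra R B] [Algebra.IsIntegral R B] (f : B →ₐ[R] v.adicCompletion K) :
    (degreeOnePrimesOver B v).Nonempty := by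
  have hf (x : B) : f x ∈ v.adicCompletionIntegers K :=
    (HeightOneSpectrum.adicCompletionIntegers.integers K v).mem_of_integral
      ((Algebra.IsIntegral.isIntegral (R := R) x).map f).tower_top
  let g : B →ₐ[R] v.adicCompletionIntegers K :=
    { __ := (f : B →+* v.adicCompletion K).codRestrict (v.adicCompletionIntegers K).toSubring hf
      commutes' := fun r ↦ Subtype.ext (f.commutes r) }
  have : FaithfulSMul R B :=
    (faithfulSMul_iff_algebraMap_injective R B).mpr fun a b hab ↦
      FaithfulSMul.algebraMap_injective R (v.adicCompletionIntegers K)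
        (by rw [← g.commutes, hab, g.commutes])
  let P := (IsLocalRing.maximalIdeal (v.adicCompletionIntegers K)).comap g
  have hP : P.LiesOver v.asIdeal := by
    rw [← under_maximalIdeal_adicCompletionIntegers (K := K) v]
    infer_instance
  exact ⟨⟨P, inferInstance, Ideal.ne_bot_of_liesOver_of_ne_bot v.ne_bot P⟩, hP,
    surjective_algebraMap_quotient_comap g
      (surjective_algebraMap_quotient_maximalIdeal_adicCompletionIntegers v)⟩

end Completions


section NumberField

variable {F L : Type*} [Field F] [NumberField F]

theorem surjective_algebraMap_of_eventually_algHom_adicCompletion [Field L] [NumberField L]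
    [Algebra F L] [IsGalois F L]
    (h : ∀ᶠ v : HeightOneSpectrum (𝓞 F) in cofinite, Nonempty (L →ₐ[F] v.adicCompletion F)) :
    Surjective (algebraMap F L) :=
  surjective_algebraMap_of_eventually_nonempty_degreeOnePrimesOver <| h.mono fun v ⟨j⟩ ↦
    degreeOnePrimesOver_nonempty_of_algHom_adicCompletion v
      ((j.restrictScalars (𝓞 F)).comp (IsScalarTower.toAlgHom (𝓞 F) (𝓞 L) L))

theorem exists_isPrimitiveRoot_of_eventually_adicCompletion (n : ℕ) [NeZero n]
    (h : ∀ᶠ v : HeightOneSpectrum (𝓞 F) in cofinite,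
      ∃ ζ : v.adicCompletion F, IsPrimitiveRoot ζ n) :
    ∃ ζ : F, IsPrimitiveRoot ζ n := by
  let L := CyclotomicField n F
  have : IsGalois F L := IsCyclotomicExtension.isGalois {n} F L
  have := IsCyclotomicExtension.isSplittingField_X_pow_sub_one n F L
  have hsurj : Surjective (algebraMap F L) :=
    surjective_algebraMap_of_eventually_algHom_adicCompletion <| h.mono fun v ⟨ζ, hζ⟩ ↦
      ⟨Polynomial.IsSplittingField.lift L (Polynomial.X ^ n - 1)
        (by simpa using Polynomial.X_pow_sub_one_splits hζ)⟩
  obtain ⟨ζ, hζ⟩ := hsurj (IsCyclotomicExtension.zeta n F L)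
  refine ⟨ζ, .of_map_of_injective (f := algebraMap F L) ?_ (algebraMap F L).injective⟩
  exact hζ ▸ IsCyclotomicExtension.zeta_spec n F L

theorem primitive_root_descends_and_neg_one_is_kth_power_general
    (F : Type*) [Field F] [NumberField F] (k s k₁ : ℕ) (hk : k = 2 ^ s * k₁) (hk₁ : Odd k₁)
    (hloc : ∀ᶠ v : HeightOneSpectrum (𝓞 F) in cofinite,
      ∃ ζ : v.adicCompletion F, IsPrimitiveRoot ζ (2 ^ (s + 1))) :
    (∃ ζ : F, IsPrimitiveRoot ζ (2 ^ (s + 1))) ∧ ∃ y : F, (-1 : F) = y ^ k := by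
  obtain ⟨ζ, hζ⟩ := exists_isPrimitiveRoot_of_eventually_adicCompletion (2 ^ (s + 1)) hloc
  have hζ_pow : ζ ^ 2 ^ s = -1 :=
    (hζ.pow (by positivity) (pow_succ 2 s)).eq_neg_one_of_two_right
  refine ⟨⟨ζ, hζ⟩, ζ, ?_⟩
  rw [hk, pow_mul, hζ_pow, hk₁.neg_one_pow]

end NumberField

/-- Let `F` be a number field and `k = 2^s · k₁` with `k₁` odd.  If a primitive
`2^(s+1)`-th root of unity lies in the completion `F_𝔭` for every finite place `𝔭` of `F`,
then a primitive `2^(s+1)`-th root of unity lies in `F`, and consequently `−1 ∈ (F^×)^k`. -/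
theorem primitive_root_descends_and_neg_one_is_kth_power
    (F : Type*) [Field F] [NumberField F] (k s k₁ : ℕ) (hk : k = 2 ^ s * k₁)
    (hk₁ : Odd k₁)
    (hloc : ∀ v : HeightOneSpectrum (𝓞 F),
      ∃ ζ : v.adicCompletion F, IsPrimitiveRoot ζ (2 ^ (s + 1))) :
    (∃ ζ : F, IsPrimitiveRoot ζ (2 ^ (s + 1))) ∧ ∃ y : F, (-1 : F) = y ^ k :=
  primitive_root_descends_and_neg_one_is_kth_power_general F k s k₁ hk hk₁ (.of_forall hloc)
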